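/- arXiv:math/0405425 — 2 statements merged into one kernel-verified Lean document; each statement's English description precedes it below -/
import Mathlib

section
/- Let [(Qᵢ,𝒬ᵢ),Tᵢ,(Δ,𝒟)], i = 1,2, be two generators with the same output space, and let f: Q₁ → Q₂ be a measurable map such that (f, id_Δ) is transition-preserving, i.e. T₂(f(x), A×B) = T₁(x, f⁻¹(A)×B) for all x ∈ Q₁, A ∈ 𝒬₂, B ∈ 𝒟. Then G_{T₁} = G_{T₂} ∘ f_*, where f_* is the pushforward map on probability measures. In particular im(G_{T₁}) ⊆ im(G_{T₂}), with equality if f_* is onto. -/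
/-!
That `(f, g)` is transition-preserving means that `T₂ (f x)` is the pushforward of `T₁ x` under
`f × g`. Since `fdmAux` integrates the transition kernel step by step, changing variables in each
of the iterated integrals shows that the process of `T₂` started in `f_* μ` has the marginals of
the process of `T₁` started in `μ` with `g` applied to each output. When `g` generates the
`σ`-algebra of its domain, as `g = id` does, these marginals also determine those of `T₁`.
-/

open MeasureTheory ProbabilityTheory
open scoped ENNReal

namespace HiddenSources

variable {Q Δ : Type*}

/-- The iterated integral appearing in the finite-dimensional marginals:
`fdmAux T n x B = ∫_{Q×B₁}⋯∫_{Q×Bₙ} T(x_{n-1}, d(xₙ,yₙ)) ⋯ T(x, d(x₁,y₁))`. -/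
noncomputable def fdmAux [MeasurableSpace Q] [MeasurableSpace Δ] (T : Kernel Q (Q × Δ)) :
    (n : ℕ) → Q → (Fin n → Set Δ) → ℝ≥0∞
  | 0, _, _ => 1
  | n + 1, x, B =>
      ∫⁻ p : Q × Δ, Set.indicator (B 0) (fun _ => fdmAux T n p.1 fun i => B i.succ) p.2 ∂(T x)

/-- The finite-dimensional marginal `Pₙ^{μ,T}(B₁ × ⋯ × Bₙ)` of the observed process of the
generator `T` with initial distribution `μ`. -/
noncomputable def fdm [MeasurableSpace Q] [MeasurableSpace Δ] (T : Kernel Q (Q × Δ))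
    (μ : Measure Q) (n : ℕ) (B : Fin n → Set Δ) : ℝ≥0∞ :=
  ∫⁻ x, fdmAux T n x B ∂μ

/-- `P` is the path measure `P^{μ,T}` on `Δ^ℕ`: a probability measure whose cylinder
sets have measure given by the finite-dimensional marginals `Pₙ^{μ,T}`. -/
def IsPathMeasure [MeasurableSpace Q] [MeasurableSpace Δ] (T : Kernel Q (Q × Δ))
    (μ : Measure Q) (P : Measure (ℕ → Δ)) : Prop :=
  IsProbabilityMeasure P ∧
    ∀ (n : ℕ) (B : Fin n → Set Δ), (∀ i, MeasurableSet (B i)) →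
      P {y | ∀ i : Fin n, y i ∈ B i} = fdm T μ n B

/-- `im(G_T)`: the set of stochastic processes (identified with their path measures on
`Δ^ℕ`) generated by `T`, as the initial distribution `μ` ranges over the probability
measures on `Q`. -/
def genSet [MeasurableSpace Q] [MeasurableSpace Δ] (T : Kernel Q (Q × Δ)) :
    Set (Measure (ℕ → Δ)) :=
  {P | ∃ μ : Measure Q, IsProbabilityMeasure μ ∧ IsPathMeasure T μ P}

/-- `(f, g)` is a transition-preserving map (morphism of generators) from `T₁` to `T₂`:
`f`, `g` are measurable and `T₂(f(x), A × B) = T₁(x, f⁻¹(A) × g⁻¹(B))` for all `x`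
and measurable `A`, `B`. -/
def TransitionPreserving {Q₁ Q₂ Δ₁ Δ₂ : Type*}
    [MeasurableSpace Q₁] [MeasurableSpace Q₂] [MeasurableSpace Δ₁] [MeasurableSpace Δ₂]
    (T₁ : Kernel Q₁ (Q₁ × Δ₁)) (T₂ : Kernel Q₂ (Q₂ × Δ₂))
    (f : Q₁ → Q₂) (g : Δ₁ → Δ₂) : Prop :=
  Measurable f ∧ Measurable g ∧
    ∀ (x : Q₁) (A : Set Q₂) (B : Set Δ₂), MeasurableSet A → MeasurableSet B →
      T₂ (f x) (A ×ˢ B) = T₁ x ((f ⁻¹' A) ×ˢ (g ⁻¹' B))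

lemma fdmAux_succ [MeasurableSpace Q] [MeasurableSpace Δ] (T : Kernel Q (Q × Δ)) {n : ℕ} (x : Q)
    {B : Fin (n + 1) → Set Δ} (hB : MeasurableSet (B 0)) :
    fdmAux T (n + 1) x B = ∫⁻ p in Prod.snd ⁻¹' B 0, fdmAux T n p.1 (Fin.tail B) ∂T x :=
  lintegral_indicator (measurable_snd hB) _

lemma measurable_fdmAux [MeasurableSpace Q] [MeasurableSpace Δ] (T : Kernel Q (Q × Δ)) {n : ℕ}
    {B : Fin n → Set Δ} (hB : ∀ i, MeasurableSet (B i)) :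
    Measurable fun x ↦ fdmAux T n x B := by
  induction n with
  | zero => exact measurable_const
  | succ n ih =>
    have htail : Measurable fun x ↦ fdmAux T n x (Fin.tail B) := ih fun i ↦ hB i.succ
    exact ((htail.comp measurable_fst).indicator (measurable_snd (hB 0))).lintegral_kernel

lemma map_comp_apply_cylinder {Δ₁ Δ₂ : Type*} [MeasurableSpace Δ₁] [MeasurableSpace Δ₂]
    {g : Δ₁ → Δ₂} (hg : Measurable g) (P : Measure (ℕ → Δ₁)) {n : ℕ} {B : Fin n → Set Δ₂}
    (hB : ∀ i, MeasurableSet (B i)) :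
    P.map (g ∘ ·) {y | ∀ i : Fin n, y i ∈ B i} = P {y | ∀ i : Fin n, y i ∈ g ⁻¹' B i} := by
  have hcyl : MeasurableSet {y : ℕ → Δ₂ | ∀ i : Fin n, y i ∈ B i} :=
    measurableSet_setOfPred.2 <| .forall fun i ↦
      measurableSet_setOfPred.1 (measurable_pi_apply _ (hB i))
  exact Measure.map_apply (by fun_prop) hcyl

section TransitionPreserving

variable {Q₁ Q₂ Δ₁ Δ₂ : Type*} [MeasurableSpace Q₁] [MeasurableSpace Q₂]
  [mΔ₁ : MeasurableSpace Δ₁] [mΔ₂ : MeasurableSpace Δ₂]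
  {T₁ : Kernel Q₁ (Q₁ × Δ₁)} [IsFiniteKernel T₁] {T₂ : Kernel Q₂ (Q₂ × Δ₂)}
  {f : Q₁ → Q₂} {g : Δ₁ → Δ₂}

lemma TransitionPreserving.apply_eq_map (h : TransitionPreserving T₁ T₂ f g) (x : Q₁) :
    T₂ (f x) = (T₁ x).map (Prod.map f g) := by
  obtain ⟨hf, hg, hT⟩ := h
  refine (Measure.ext_prod fun {A B} hA hB ↦ ?_).symm
  rw [Measure.map_apply (hf.prodMap hg) (hA.prod hB), hT x A B hA hB]
  rfl

lemma TransitionPreserving.fdmAux_apply (h : TransitionPreserving T₁ T₂ f g) {n : ℕ} (x : Q₁)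
    {B : Fin n → Set Δ₂} (hB : ∀ i, MeasurableSet (B i)) :
    fdmAux T₂ n (f x) B = fdmAux T₁ n x fun i ↦ g ⁻¹' B i := by
  induction n generalizing x with
  | zero => rfl
  | succ n ih =>
    have hB' : ∀ i, MeasurableSet (Fin.tail B i) := fun i ↦ hB i.succ
    calc fdmAux T₂ (n + 1) (f x) B
        = ∫⁻ p in Prod.snd ⁻¹' B 0, fdmAux T₂ n p.1 (Fin.tail B)
            ∂(T₁ x).map (Prod.map f g) := by
          rw [fdmAux_succ T₂ _ (hB 0), h.apply_eq_map]
      _ = ∫⁻ p in Prod.snd ⁻¹' (g ⁻¹' B 0), fdmAux T₂ n (f p.1) (Fin.tail B) ∂T₁ x :=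
          setLIntegral_map (measurable_snd (hB 0)) ((measurable_fdmAux T₂ hB').comp measurable_fst)
            (h.1.prodMap h.2.1)
      _ = ∫⁻ p in Prod.snd ⁻¹' (g ⁻¹' B 0), fdmAux T₁ n p.1 (fun i ↦ g ⁻¹' Fin.tail B i) ∂T₁ x :=
          lintegral_congr fun p ↦ ih p.1 hB'
      _ = fdmAux T₁ (n + 1) x fun i ↦ g ⁻¹' B i :=
          (fdmAux_succ T₁ x (B := fun i ↦ g ⁻¹' B i) (h.2.1 (hB 0))).symm

lemma TransitionPreserving.fdm_map (h : TransitionPreserving T₁ T₂ f g) (μ : Measure Q₁) {n : ℕ}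
    {B : Fin n → Set Δ₂} (hB : ∀ i, MeasurableSet (B i)) :
    fdm T₂ (μ.map f) n B = fdm T₁ μ n fun i ↦ g ⁻¹' B i :=
  (lintegral_map (measurable_fdmAux T₂ hB) h.1).trans <|
    lintegral_congr fun x ↦ h.fdmAux_apply x hB

lemma TransitionPreserving.isPathMeasure_map (h : TransitionPreserving T₁ T₂ f g)
    {μ : Measure Q₁} {P : Measure (ℕ → Δ₁)} (hP : IsPathMeasure T₁ μ P) :
    IsPathMeasure T₂ (μ.map f) (P.map (g ∘ ·)) := by
  obtain ⟨hprob, hcyl⟩ := hP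
  have hg : Measurable g := h.2.1
  have hcomp : Measurable fun y : ℕ → Δ₁ ↦ g ∘ y := by fun_prop
  refine ⟨Measure.isProbabilityMeasure_map hcomp.aemeasurable, fun n B hB ↦ ?_⟩
  rw [map_comp_apply_cylinder hg P hB, h.fdm_map μ hB]
  exact hcyl n _ fun i ↦ hg (hB i)

lemma TransitionPreserving.isPathMeasure_of_map (h : TransitionPreserving T₁ T₂ f g)
    (hΔ : mΔ₂.comap g = mΔ₁) {μ : Measure Q₁} {P : Measure (ℕ → Δ₁)}
    (hP : IsPathMeasure T₂ (μ.map f) (P.map (g ∘ ·))) : IsPathMeasure T₁ μ P := by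
  obtain ⟨hprob, hcyl⟩ := hP
  have hg : Measurable g := h.2.1
  have hcomp : Measurable fun y : ℕ → Δ₁ ↦ g ∘ y := by fun_prop
  refine ⟨(Measure.isProbabilityMeasure_map_iff hcomp.aemeasurable).1 hprob, fun n B hB ↦ ?_⟩
  have hpre : ∀ i, ∃ C, MeasurableSet C ∧ g ⁻¹' C = B i := fun i ↦
    MeasurableSpace.measurableSet_comap.1 (hΔ ▸ hB i)
  choose C hC hCB using hpre
  obtain rfl : (fun i ↦ g ⁻¹' C i) = B := funext hCB
  rw [← map_comp_apply_cylinder hg P hC, hcyl n C hC, h.fdm_map μ hC]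

lemma TransitionPreserving.genSet_subset (h : TransitionPreserving T₁ T₂ f g) :
    genSet T₁ ⊆ {P | P.map (g ∘ ·) ∈ genSet T₂} := by
  rintro P ⟨μ, hμ, hP⟩
  exact ⟨μ.map f, Measure.isProbabilityMeasure_map h.1.aemeasurable, h.isPathMeasure_map hP⟩

theorem genSet_subset_of_transitionPreserving_general (h : TransitionPreserving T₁ T₂ f g) :
    (∀ (μ : Measure Q₁) (P : Measure (ℕ → Δ₁)),
        IsPathMeasure T₁ μ P → IsPathMeasure T₂ (μ.map f) (P.map (g ∘ ·))) ∧
      genSet T₁ ⊆ {P | P.map (g ∘ ·) ∈ genSet T₂} ∧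
      (mΔ₂.comap g = mΔ₁ →
        (∀ ν : Measure Q₂, IsProbabilityMeasure ν →
          ∃ μ : Measure Q₁, IsProbabilityMeasure μ ∧ μ.map f = ν) →
        genSet T₁ = {P | P.map (g ∘ ·) ∈ genSet T₂}) := by
  refine ⟨fun _ _ ↦ h.isPathMeasure_map, h.genSet_subset,
    fun hΔ hsurj ↦ h.genSet_subset.antisymm ?_⟩
  rintro P ⟨ν, hν, hP⟩
  obtain ⟨μ, hμ, rfl⟩ := hsurj ν hν
  exact ⟨μ, hμ, h.isPathMeasure_of_map hΔ hP⟩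

end TransitionPreserving

/-- **Corollary 3.3.** If `f : Q₁ → Q₂` is transition-preserving (with identity on the
common output space), then `G_{T₁} = G_{T₂} ∘ f_*`; in particular
`im(G_{T₁}) ⊆ im(G_{T₂})`, with equality if `f_*` is onto. -/
theorem genSet_subset_of_transitionPreserving {Q₁ Q₂ Δ : Type*}
    [MeasurableSpace Q₁] [MeasurableSpace Q₂] [MeasurableSpace Δ]
    (T₁ : Kernel Q₁ (Q₁ × Δ)) (T₂ : Kernel Q₂ (Q₂ × Δ))
    [IsMarkovKernel T₁] [IsMarkovKernel T₂]
    (f : Q₁ → Q₂) (hf : TransitionPreserving T₁ T₂ f id) :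
    (∀ (μ : Measure Q₁), IsProbabilityMeasure μ → ∀ P : Measure (ℕ → Δ),
        IsPathMeasure T₁ μ P → IsPathMeasure T₂ (μ.map f) P) ∧
      genSet T₁ ⊆ genSet T₂ ∧
      ((∀ ν : Measure Q₂, IsProbabilityMeasure ν →
          ∃ μ : Measure Q₁, IsProbabilityMeasure μ ∧ μ.map f = ν) →
        genSet T₁ = genSet T₂) := by
  obtain ⟨hpath, hsub, honto⟩ := genSet_subset_of_transitionPreserving_general hf
  simp only [Function.id_comp, Measure.map_id', Set.ofPred_mem_eq] at hpath hsub honto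
  exact ⟨fun μ _ ↦ hpath μ, hsub, honto MeasurableSpace.comap_id⟩

end HiddenSources
end

section
/- Let K = {x ∈ ℂ : |x| = 1} be the unit circle with its Borel σ-algebra, A₁ = {e^{iφ} : φ ∈ [0,π)} its upper half and A₂ = {e^{iφ} : φ ∈ [π,2π)} its lower half. Fix a ∈ K which is not a root of unity, let f(x) = a·x and g(x) = k for x ∈ A_k (k = 1,2), and let T be the deterministic generator T(x, A×B) := 1 if f(x) ∈ A and g(f(x)) ∈ B, else 0, with output space {1,2}. Then σ_Q(T) equals the full Borel σ-algebra of the unit circle K. -/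
open MeasureTheory ProbabilityTheory
open scoped ENNReal Classical

namespace HiddenSources

variable {Q Δ : Type*}

/-- A σ-subalgebra `𝒜 ≤ 𝒬` such that `T(·,C)` is `𝒜`-measurable for every
`C ∈ 𝒜 ⊗ 𝒟`. -/
def IsSufficientAlgebra [mQ : MeasurableSpace Q] [mΔ : MeasurableSpace Δ]
    (T : Kernel Q (Q × Δ)) (𝒜 : MeasurableSpace Q) : Prop :=
  𝒜 ≤ mQ ∧ ∀ C : Set (Q × Δ), MeasurableSet[𝒜.prod mΔ] C → Measurable[𝒜] fun x => T x C

/-- `σ_Q(T)`: the smallest σ-subalgebra of `𝒬` such that `T(·,C)` is `σ_Q(T)`-measurable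
for all `C ∈ σ_Q(T) ⊗ 𝒟`, obtained as the intersection of all σ-subalgebras with this
invariance property. -/
def sigmaQ [mQ : MeasurableSpace Q] [mΔ : MeasurableSpace Δ] (T : Kernel Q (Q × Δ)) :
    MeasurableSpace Q :=
  sInf {𝒜 | @IsSufficientAlgebra Q Δ mQ mΔ T 𝒜}

noncomputable instance : MeasurableSpace Circle := borel Circle

/-- The measurement map of the circle-rotation example: `g(x) = 1` on the upper half
`A₁ = {e^{iφ} : φ ∈ [0,π)}` and `g(x) = 2` on the lower half
`A₂ = {e^{iφ} : φ ∈ [π,2π)}`. -/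
noncomputable def circleObs (x : Circle) : ℕ :=
  if 0 ≤ Complex.arg (x : ℂ) ∧ Complex.arg (x : ℂ) < Real.pi then 1 else 2

/-!
Let `𝒜` be a sufficient algebra of the deterministic generator of `f` and `g`. Evaluating the kernel
on rectangles shows that `f` is measurable from `𝒜` to `𝒜` and that `g ∘ f` is `𝒜`-measurable, hence
so is the whole itinerary `x ↦ (g (f x), g (f (f x)), …)`. If the itinerary is injective on a
standard Borel space, it is a measurable embedding by the Lusin–Souslin theorem, so the σ-algebra it
generates, and with it `𝒜`, is everything.

For the rotation by `a`, let `x ≠ y`. The rotations `c` taking `x` to the open upper and `y` to the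
open lower half-circle form an open set, which is nonempty: turn `x - y` to point along `i`. The
powers of `a` are dense, so one of them lies in this set, and itineraries separate points.
-/

section Generator

variable {𝒜 : MeasurableSpace Q} [mQ : MeasurableSpace Q] [MeasurableSpace Δ]
  {T : Kernel Q (Q × Δ)} {f : Q → Q} {g : Q → Δ}

theorem isSufficientAlgebra_self (T : Kernel Q (Q × Δ)) : IsSufficientAlgebra T mQ :=
  ⟨le_rfl, fun _ hC => T.measurable_coe hC⟩

theorem sigmaQ_le (T : Kernel Q (Q × Δ)) : sigmaQ T ≤ mQ :=
  sInf_le (isSufficientAlgebra_self T)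

/-- `T` is the deterministic generator of the dynamics `f` observed through `g`: the internal
state `x` moves to `f x`, and the observation `g (f x)` of the new state is emitted. The kernel is
specified on rectangles, so that neither `f` nor `g` has to be measurable a priori. -/
def IsDeterministicGenerator (T : Kernel Q (Q × Δ)) (f : Q → Q) (g : Q → Δ) : Prop :=
  ∀ (x : Q) (A : Set Q) (B : Set Δ), MeasurableSet A → MeasurableSet B →
    T x (A ×ˢ B) = if f x ∈ A ∧ g (f x) ∈ B then 1 else 0

/-- The itinerary of a state: the sequence of observations emitted by the deterministic generator
of `f` and `g` started in `x`. The initial state itself is not observed. -/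
def itinerary (f : Q → Q) (g : Q → Δ) (x : Q) (n : ℕ) : Δ :=
  g (f^[n + 1] x)

namespace IsDeterministicGenerator

theorem measurableSet_preimage (hT : IsDeterministicGenerator T f g)
    (h𝒜 : IsSufficientAlgebra T 𝒜) {A : Set Q} {B : Set Δ}
    (hA : MeasurableSet[𝒜] A) (hB : MeasurableSet B) :
    MeasurableSet[𝒜] (f ⁻¹' (A ∩ g ⁻¹' B)) := by
  have hTAB : (fun x => T x (A ×ˢ B)) = (f ⁻¹' (A ∩ g ⁻¹' B)).indicator fun _ => 1 := by
    ext x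
    simp only [hT x A B (h𝒜.1 A hA) hB, Set.indicator_apply, Set.mem_preimage, Set.mem_inter_iff]
  rw [← measurable_indicator_const_iff (1 : ℝ≥0∞), ← hTAB]
  exact h𝒜.2 _ (hA.prod hB)

theorem measurable_map (hT : IsDeterministicGenerator T f g) (h𝒜 : IsSufficientAlgebra T 𝒜) :
    Measurable[𝒜, 𝒜] f := fun A hA => by
  simpa using hT.measurableSet_preimage h𝒜 hA MeasurableSet.univ

theorem measurable_obs_comp_map (hT : IsDeterministicGenerator T f g)
    (h𝒜 : IsSufficientAlgebra T 𝒜) : Measurable[𝒜] (g ∘ f) := fun B hB => by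
  simpa [Set.preimage_comp] using hT.measurableSet_preimage h𝒜 MeasurableSet.univ hB

theorem measurable_itinerary (hT : IsDeterministicGenerator T f g)
    (h𝒜 : IsSufficientAlgebra T 𝒜) : Measurable[𝒜] (itinerary f g) := by
  refine @measurable_pi_lambda _ _ _ 𝒜 _ _ fun n => ?_
  have hcomp : (fun x => itinerary f g x n) = (g ∘ f) ∘ f^[n] := by
    ext x
    simp only [itinerary, Function.iterate_succ_apply', Function.comp_apply]
  exact hcomp ▸ (hT.measurable_obs_comp_map h𝒜).comp ((hT.measurable_map h𝒜).iterate n)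

end IsDeterministicGenerator

theorem le_of_measurable_of_injective [StandardBorelSpace Q] {E : Type*} [MeasurableSpace E]
    [MeasurableSpace.CountablySeparated E] {F : Q → E} (h𝒜 : 𝒜 ≤ mQ) (hF : Measurable[𝒜] F)
    (hinj : F.Injective) : mQ ≤ 𝒜 :=
  ((hF.mono h𝒜 le_rfl).measurableEmbedding hinj).comap_eq.symm.trans_le hF.comap_le

theorem IsDeterministicGenerator.le_of_isSufficientAlgebra [StandardBorelSpace Q]
    [MeasurableSpace.CountablySeparated Δ] (hT : IsDeterministicGenerator T f g)
    (hinj : (itinerary f g).Injective) (h𝒜 : IsSufficientAlgebra T 𝒜) : mQ ≤ 𝒜 := by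
  obtain ⟨code, hcode, hcode_inj⟩ :=
    MeasurableSpace.measurable_injection_nat_bool_of_countablySeparated Δ
  have hcode_meas : Measurable fun (w : ℕ → Δ) n => code (w n) := by fun_prop
  exact le_of_measurable_of_injective h𝒜.1 (hcode_meas.comp (hT.measurable_itinerary h𝒜))
    (hcode_inj.comp_left.comp hinj)

theorem IsDeterministicGenerator.sigmaQ_eq [StandardBorelSpace Q]
    [MeasurableSpace.CountablySeparated Δ] (hT : IsDeterministicGenerator T f g)
    (hinj : (itinerary f g).Injective) : sigmaQ T = mQ :=
  (sigmaQ_le T).antisymm <| le_sInf fun _ => hT.le_of_isSufficientAlgebra (mQ := mQ) hinj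

end Generator

section Circle

instance : BorelSpace Circle := ⟨rfl⟩

theorem denseRange_circle_pow {a : Circle} (ha : ¬IsOfFinOrder a) :
    DenseRange (a ^ · : ℕ → Circle) := by
  have : Fact ((0 : ℝ) < 1) := ⟨one_pos⟩
  let e := AddCircle.homeomorphCircle (T := 1) one_ne_zero
  obtain ⟨t, ht⟩ := e.surjective a
  rw [AddCircle.homeomorphCircle_apply] at ht
  have ht_order : addOrderOf t = 0 := by
    rw [addOrderOf_eq_zero_iff']
    intro n hn hnt
    refine ha (isOfFinOrder_iff_pow_eq_one.2 ⟨n, hn, ?_⟩)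
    rw [← ht, ← AddCircle.toCircle_nsmul, hnt, AddCircle.toCircle_zero]
  have hdense : DenseRange (e ∘ (· • t : ℤ → AddCircle (1 : ℝ))) :=
    e.surjective.denseRange.comp (AddCircle.denseRange_zsmul_iff.2 ht_order) e.continuous
  have he : e ∘ (· • t : ℤ → AddCircle (1 : ℝ)) = (a ^ ·) := by
    ext n
    simp only [e, Function.comp_apply, AddCircle.homeomorphCircle_apply,
      AddCircle.toCircle_zsmul, ht]
  rwa [he, denseRange_zpow_iff_pow] at hdense

theorem circleObs_of_im_pos {x : Circle} (hx : 0 < (x : ℂ).im) : circleObs x = 1 :=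
  if_pos ⟨Complex.arg_nonneg_iff.2 hx.le, Complex.arg_lt_pi_iff.2 (Or.inr hx.ne')⟩

theorem circleObs_of_im_neg {x : Circle} (hx : (x : ℂ).im < 0) : circleObs x = 2 :=
  if_neg fun h => hx.not_ge (Complex.arg_nonneg_iff.1 h.1)

theorem exists_circle_norm_mul_im_eq_inner (v : ℂ) :
    ∃ c : Circle, ∀ u : ℂ, ‖v‖ * (c * u).im = inner ℝ v u := by
  -- `c` rotates the direction of `v` to that of `i`.
  refine ⟨Circle.exp (Real.pi / 2) * (Circle.exp v.arg)⁻¹, fun u => ?_⟩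
  have hv : ((‖v‖ : ℝ) : ℂ) * Circle.exp v.arg = v := by
    rw [Circle.coe_exp, Complex.norm_mul_exp_arg_mul_I]
  calc ‖v‖ * (↑(Circle.exp (Real.pi / 2) * (Circle.exp v.arg)⁻¹) * u).im
    _ = (‖v‖ * (starRingEnd ℂ (Circle.exp v.arg) * u)).re := by
      rw [Circle.coe_mul, Circle.coe_inv_eq_conj, Circle.coe_exp, Complex.ofReal_div,
        Complex.ofReal_ofNat, Complex.exp_pi_div_two_mul_I, mul_assoc, Complex.I_mul_im,
        Complex.re_ofReal_mul]
    _ = (starRingEnd ℂ (‖v‖ * Circle.exp v.arg) * u).re := by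
      rw [map_mul, Complex.conj_ofReal, mul_assoc]
    _ = inner ℝ v u := by rw [hv, Complex.inner, mul_comm]

theorem exists_circle_im_pos_and_im_neg {x y : Circle} (hxy : x ≠ y) :
    ∃ c : Circle, 0 < (↑(c * x) : ℂ).im ∧ (↑(c * y) : ℂ).im < 0 := by
  obtain ⟨c, hc⟩ := exists_circle_norm_mul_im_eq_inner ((x : ℂ) - y)
  have hnorm : 0 < ‖(x : ℂ) - y‖ := norm_pos_iff.2 (sub_ne_zero.2 (Circle.coe_injective.ne hxy))
  have hlt : inner ℝ (x : ℂ) y < 1 :=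
    (inner_lt_one_iff_real_of_norm_eq_one x.norm_coe y.norm_coe).2 (Circle.coe_injective.ne hxy)
  refine ⟨c, pos_of_mul_pos_right (a := ‖(x : ℂ) - y‖) ?_ hnorm.le,
    neg_of_mul_neg_right (a := ‖(x : ℂ) - y‖) ?_ hnorm.le⟩
  · rw [Circle.coe_mul, hc, inner_sub_left, real_inner_self_eq_norm_sq, x.norm_coe,
      real_inner_comm]
    linarith
  · rw [Circle.coe_mul, hc, inner_sub_left, real_inner_self_eq_norm_sq, y.norm_coe]
    linarith

theorem injective_circleObs_mul_of_denseRange {ι : Type*} {c : ι → Circle} (hc : DenseRange c) :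
    Function.Injective fun (x : Circle) i => circleObs (c i * x) := by
  intro x y hobs
  by_contra hxy
  have hopen : IsOpen {z : Circle | 0 < (↑(z * x) : ℂ).im ∧ (↑(z * y) : ℂ).im < 0} := by
    have hcont (w : Circle) : Continuous fun z : Circle => (↑(z * w) : ℂ).im := by
      simp only [Circle.coe_mul]
      fun_prop
    exact (isOpen_lt continuous_const (hcont x)).inter (isOpen_lt (hcont y) continuous_const)
  obtain ⟨i, hx, hy⟩ := hc.exists_mem_open hopen (exists_circle_im_pos_and_im_neg hxy)
  have hi : circleObs (c i * x) = circleObs (c i * y) := congrFun hobs i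
  rw [circleObs_of_im_pos hx, circleObs_of_im_neg hy] at hi
  exact absurd hi (by norm_num)

theorem injective_itinerary_circle_rotation {a : Circle} (ha : ¬IsOfFinOrder a) :
    (itinerary (a * ·) circleObs).Injective := by
  have hcomp : itinerary (a * ·) circleObs =
      (fun x (n : ℕ) => circleObs (a ^ n * x)) ∘ (a * ·) := by
    ext x n
    simp only [itinerary, mul_left_iterate, Function.comp_apply, pow_succ, mul_assoc]
  rw [hcomp]
  exact (injective_circleObs_mul_of_denseRange (denseRange_circle_pow ha)).comp
    (mul_right_injective a)

end Circle

/-- **Example 4.3.2(b) (Rotation of the unit circle, irrational rotation).** Let `a` be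
an element of the unit circle that is not a root of unity, `f(x) = a·x`, and `g` the
upper/lower-half measurement. For the deterministic generator `T(x, A × B) = 1` if
`f(x) ∈ A` and `g(f(x)) ∈ B`, else `0`, the reduced σ-algebra `σ_Q(T)` is the full
Borel σ-algebra of the unit circle. -/
theorem circle_rotation_not_root_of_unity (a : Circle)
    (ha : ∀ p : ℕ, p ≠ 0 → a ^ p ≠ 1)
    (T : Kernel Circle (Circle × ℕ)) [IsMarkovKernel T]
    (hT : ∀ (x : Circle) (A : Set Circle) (B : Set ℕ), MeasurableSet A → MeasurableSet B →
      T x (A ×ˢ B) = if a * x ∈ A ∧ circleObs (a * x) ∈ B then 1 else 0) :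
    sigmaQ T = borel Circle := by
  have ha' : ¬IsOfFinOrder a := fun h => by
    obtain ⟨p, hp, hap⟩ := isOfFinOrder_iff_pow_eq_one.1 h
    exact ha p hp.ne' hap
  have hdet : IsDeterministicGenerator T (a * ·) circleObs := hT
  exact hdet.sigmaQ_eq (injective_itinerary_circle_rotation ha')

end HiddenSources
end
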